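/- arXiv:1804.08011 — 2 statements merged into one kernel-verified Lean document; each statement's English description precedes it below -/
import Mathlib

section
/- Let R be a commutative ring and consider the polynomial ring R[x₀,…,x_a]. For all indices 0 ≤ i, j, k, l ≤ a with i + j = k + l, the binomial x_i x_j − x_k x_l lies in the ideal I₂(MX) generated by the 2×2 minors of the matrix MX with rows (x₀,…,x_{a−1}) and (x₁,…,x_a). -/
open MvPolynomial

noncomputable section

/-- The ideal generated by the 2×2 minors of the Hankel matrix `MX` with rows
`(x₀,…,x_{a−1})` and `(x₁,…,x_a)`, inside `R[x₀,…,x_a]`. -/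
def I2MX (R : Type*) [CommRing R] (a : ℕ) : Ideal (MvPolynomial (Fin (a + 1)) R) :=
  Ideal.span { f | ∃ c c' : Fin a,
    f = X c.castSucc * X c'.succ - X c'.castSucc * X c.succ }

section Antidiagonal

variable {α : Type*} {a : ℕ} {f : Fin (a + 1) → Fin (a + 1) → α}

theorem apply_eq_apply_of_add_eq_add_of_le
    (hf : ∀ c c' : Fin a, f c.succ c'.castSucc = f c.castSucc c'.succ)
    {i j k l : Fin (a + 1)} (hki : k ≤ i) (hsum : (i : ℕ) + j = k + l) : f i j = f k l := by
  induction i using Fin.induction generalizing j with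
  | zero =>
    obtain rfl : k = 0 := Fin.le_zero_iff.mp hki
    obtain rfl : j = l := Fin.ext (Nat.add_left_cancel hsum)
    rfl
  | succ i ih =>
    rcases hki.eq_or_lt with rfl | hlt
    · obtain rfl : j = l := Fin.ext (Nat.add_left_cancel hsum)
      rfl
    · have hki' : k ≤ i.castSucc := Fin.le_castSucc_iff.mpr hlt
      have hj : j ≠ Fin.last a := by
        rintro rfl
        simp only [Fin.lt_def, Fin.val_succ, Fin.val_last] at hlt hsum
        omega
      obtain ⟨j, rfl⟩ := Fin.exists_castSucc_eq.mpr hj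
      calc
        f i.succ j.castSucc = f i.castSucc j.succ := hf i j
        _ = f k l := ih hki' (by simp only [Fin.val_succ, Fin.val_castSucc] at hsum ⊢; omega)

theorem apply_eq_apply_of_add_eq_add
    (hf : ∀ c c' : Fin a, f c.succ c'.castSucc = f c.castSucc c'.succ)
    {i j k l : Fin (a + 1)} (hsum : (i : ℕ) + j = k + l) : f i j = f k l := by
  rcases le_total k i with hki | hik
  · exact apply_eq_apply_of_add_eq_add_of_le hf hki hsum
  · exact (apply_eq_apply_of_add_eq_add_of_le hf hik hsum.symm).symm

end Antidiagonal

theorem mk_I2MX_X_succ_mul_X_castSucc (R : Type*) [CommRing R] {a : ℕ} (c c' : Fin a) :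
    Ideal.Quotient.mk (I2MX R a) (X c.succ * X c'.castSucc) =
      Ideal.Quotient.mk (I2MX R a) (X c.castSucc * X c'.succ) := by
  rw [mul_comm (X c.succ), eq_comm, Ideal.Quotient.eq]
  exact Ideal.subset_span ⟨c, c', rfl⟩

/-- Over a commutative ring `R`, in `R[x₀,…,x_a]`, for all
indices `0 ≤ i, j, k, l ≤ a` with `i + j = k + l`, the binomial
`x_i·x_j − x_k·x_l` lies in `I₂(MX)`. -/
theorem stmt5 (R : Type*) [CommRing R] (a : ℕ) (i j k l : ℕ)
    (hi : i ≤ a) (hj : j ≤ a) (hk : k ≤ a) (hl : l ≤ a) (hsum : i + j = k + l) :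
    (X ⟨i, by omega⟩ * X ⟨j, by omega⟩ - X ⟨k, by omega⟩ * X ⟨l, by omega⟩ :
      MvPolynomial (Fin (a + 1)) R) ∈ I2MX R a := by
  rw [← Ideal.Quotient.eq]
  exact apply_eq_apply_of_add_eq_add
    (f := fun i j => Ideal.Quotient.mk (I2MX R a) (X i * X j))
    (mk_I2MX_X_succ_mul_X_castSucc R) hsum

end
end

section
/- Let F be a field, let a, b ≥ 1, and set q = a + b − 2. In P = F[x₀,…,x_a, y₀,…,y_b], for all indices 0 ≤ i < j ≤ a−1 and 0 ≤ s ≤ b−1, both elements x_j·x₀^{q−i−s}x₁^{i+s} − x_i·x₀^{q−j−s}x₁^{j+s} and x_{j+1}·x₀^{q−i−s}x₁^{i+s} − x_{i+1}·x₀^{q−j−s}x₁^{j+s} lie in the ideal I₂(M) generated by the 2×2 minors of the matrix M with rows (x₀,…,x_{a−1}, y₀,…,y_{b−1}) and (x₁,…,x_a, y₁,…,y_b). -/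
open MvPolynomial

noncomputable section

/-- The polynomial ring `P = F[x₀,…,x_a, y₀,…,y_b]`. -/
abbrev KPoly (F : Type*) [CommRing F] (a b : ℕ) : Type _ :=
  MvPolynomial (Fin (a + 1) ⊕ Fin (b + 1)) F

variable (F : Type*) [CommRing F] (a b : ℕ)

/-- The variable `x_i`. -/
def xv (i : Fin (a + 1)) : KPoly F a b := X (Sum.inl i)

/-- The variable `y_j`. -/
def yv (j : Fin (b + 1)) : KPoly F a b := X (Sum.inr j)

/-- The first row `(x₀,…,x_{a−1}, y₀,…,y_{b−1})` of the matrix `M`. -/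
def mrow1 : Fin a ⊕ Fin b → KPoly F a b
  | Sum.inl c => xv F a b c.castSucc
  | Sum.inr c => yv F a b c.castSucc

/-- The second row `(x₁,…,x_a, y₁,…,y_b)` of the matrix `M`. -/
def mrow2 : Fin a ⊕ Fin b → KPoly F a b
  | Sum.inl c => xv F a b c.succ
  | Sum.inr c => yv F a b c.succ

/-- The ideal generated by the 2×2 minors of `M`, i.e. the homogeneous ideal
of the rational normal scroll `S(a,b)`. -/
def I2M : Ideal (KPoly F a b) :=
  Ideal.span { f | ∃ c c' : Fin a ⊕ Fin b,
    f = mrow1 F a b c * mrow2 F a b c' - mrow1 F a b c' * mrow2 F a b c }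

/-!
Modulo `I₂(M)` the two entries `u`, `v` of any column of `M` satisfy `x_{k+1} u = x_k v`, because
the minor on that column and the `k`-th `x`-column vanishes. Lowering the index of `x` by one thus
trades a factor `u` for a factor `v`, so `x_j u^p v^r` depends only on `p - j` and `r + j`. The
binomials of the theorem are differences of two such products with `u = x₀`, `v = x₁`.
-/

theorem mul_pow_eq_mul_pow_of_forall_succ {M : Type*} [CommMonoid M] {n : ℕ}
    {x : Fin (n + 1) → M} {u v : M} (h : ∀ k : Fin n, x k.succ * u = x k.castSucc * v)
    {i j : Fin (n + 1)} {d : ℕ} (hd : (j : ℕ) = i + d) : x j * u ^ d = x i * v ^ d := by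
  induction d generalizing j with
  | zero => simp only [pow_zero, Fin.ext hd]
  | succ d ih =>
    obtain ⟨k, rfl⟩ : ∃ k : Fin n, k.succ = j := ⟨⟨i + d, by omega⟩, Fin.ext hd.symm⟩
    have hk : (k.castSucc : ℕ) = i + d := by simpa [← add_assoc] using hd
    calc x k.succ * u ^ (d + 1)
        = x k.succ * u * u ^ d := by rw [pow_succ', mul_assoc]
      _ = x k.castSucc * u ^ d * v := by rw [h, mul_right_comm]
      _ = x i * v ^ (d + 1) := by rw [ih hk, pow_succ, mul_assoc]

theorem mul_pow_mul_pow_eq_of_forall_succ {M : Type*} [CommMonoid M] {n : ℕ}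
    {x : Fin (n + 1) → M} {u v : M} (h : ∀ k : Fin n, x k.succ * u = x k.castSucc * v)
    {i j : Fin (n + 1)} {p p' r r' : ℕ} (hp : p + i = p' + j) (hr : r + j = r' + i) :
    x j * (u ^ p * v ^ r) = x i * (u ^ p' * v ^ r') := by
  wlog hij : i ≤ j generalizing i j p p' r r'
  · exact (this hp.symm hr.symm (le_of_not_ge hij)).symm
  obtain ⟨d, hd⟩ := Nat.exists_eq_add_of_le (Fin.le_def.mp hij)
  obtain rfl : p = d + p' := by omega
  obtain rfl : r' = d + r := by omega
  calc x j * (u ^ (d + p') * v ^ r)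
      = x j * u ^ d * (u ^ p' * v ^ r) := by simp only [pow_add, mul_assoc]
    _ = x i * v ^ d * (u ^ p' * v ^ r) := by rw [mul_pow_eq_mul_pow_of_forall_succ h hd]
    _ = x i * (u ^ p' * v ^ (d + r)) := by rw [pow_add, mul_assoc, mul_left_comm (v ^ d)]

theorem minor_mem_I2M (c c' : Fin a ⊕ Fin b) :
    mrow1 F a b c * mrow2 F a b c' - mrow1 F a b c' * mrow2 F a b c ∈ I2M F a b :=
  Ideal.subset_span ⟨c, c', rfl⟩

theorem mk_xv_succ_mul_mk_mrow1 (c : Fin a ⊕ Fin b) (k : Fin a) :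
    Ideal.Quotient.mk (I2M F a b) (xv F a b k.succ) * Ideal.Quotient.mk _ (mrow1 F a b c) =
      Ideal.Quotient.mk _ (xv F a b k.castSucc) * Ideal.Quotient.mk _ (mrow2 F a b c) := by
  rw [mul_comm, ← map_mul, ← map_mul, Ideal.Quotient.mk_eq_mk_iff_sub_mem]
  exact minor_mem_I2M F a b c (Sum.inl k)

theorem xv_mul_pow_mul_pow_sub_mem_I2M (c : Fin a ⊕ Fin b) {i j : Fin (a + 1)}
    {p p' r r' : ℕ} (hp : p + i = p' + j) (hr : r + j = r' + i) :
    xv F a b j * (mrow1 F a b c ^ p * mrow2 F a b c ^ r)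
      - xv F a b i * (mrow1 F a b c ^ p' * mrow2 F a b c ^ r') ∈ I2M F a b := by
  rw [← Ideal.Quotient.mk_eq_mk_iff_sub_mem]
  simp only [map_mul, map_pow]
  exact mul_pow_mul_pow_eq_of_forall_succ
    (x := fun k ↦ Ideal.Quotient.mk (I2M F a b) (xv F a b k))
    (mk_xv_succ_mul_mk_mrow1 F a b c) hp hr

theorem stmt6_general (c : Fin a ⊕ Fin b) {q i j s : ℕ} (hi : i < a) (hj : j < a)
    (hiq : i + s ≤ q) (hjq : j + s ≤ q) :
    (xv F a b ⟨j, by omega⟩ * (mrow1 F a b c ^ (q - i - s) * mrow2 F a b c ^ (i + s))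
        - xv F a b ⟨i, by omega⟩ * (mrow1 F a b c ^ (q - j - s) * mrow2 F a b c ^ (j + s))
        ∈ I2M F a b)
    ∧ (xv F a b ⟨j + 1, by omega⟩ * (mrow1 F a b c ^ (q - i - s) * mrow2 F a b c ^ (i + s))
        - xv F a b ⟨i + 1, by omega⟩ * (mrow1 F a b c ^ (q - j - s) * mrow2 F a b c ^ (j + s))
        ∈ I2M F a b) := by
  refine ⟨xv_mul_pow_mul_pow_sub_mem_I2M F a b c ?_ ?_,
    xv_mul_pow_mul_pow_sub_mem_I2M F a b c ?_ ?_⟩ <;> dsimp only <;> omega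

/-- Let `F` be a field, `a, b ≥ 1`, `q = a + b − 2`. For
`0 ≤ i < j ≤ a−1` and `0 ≤ s ≤ b−1`, both binomials
`x_j·x₀^{q−i−s}x₁^{i+s} − x_i·x₀^{q−j−s}x₁^{j+s}` and
`x_{j+1}·x₀^{q−i−s}x₁^{i+s} − x_{i+1}·x₀^{q−j−s}x₁^{j+s}` lie in `I₂(M)`. -/
theorem stmt6 (F : Type*) [Field F] (a b : ℕ) (ha : 1 ≤ a) (hb : 1 ≤ b)
    (q : ℕ) (hq : q = a + b - 2)
    (i j s : ℕ) (hij : i < j) (hj : j ≤ a - 1) (hs : s ≤ b - 1) :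
    (xv F a b ⟨j, by omega⟩ * (xv F a b ⟨0, by omega⟩ ^ (q - i - s)
          * xv F a b ⟨1, by omega⟩ ^ (i + s))
        - xv F a b ⟨i, by omega⟩ * (xv F a b ⟨0, by omega⟩ ^ (q - j - s)
          * xv F a b ⟨1, by omega⟩ ^ (j + s)) ∈ I2M F a b)
    ∧ (xv F a b ⟨j + 1, by omega⟩ * (xv F a b ⟨0, by omega⟩ ^ (q - i - s)
          * xv F a b ⟨1, by omega⟩ ^ (i + s))
        - xv F a b ⟨i + 1, by omega⟩ * (xv F a b ⟨0, by omega⟩ ^ (q - j - s)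
          * xv F a b ⟨1, by omega⟩ ^ (j + s)) ∈ I2M F a b) :=
  stmt6_general F a b (Sum.inl ⟨0, by omega⟩) (by omega) (by omega) (by omega) (by omega)

end
end
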